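/- arXiv:2511.20802 — 2 statements merged into one kernel-verified Lean document; each statement's English description precedes it below -/
import Mathlib

section
/- Axiom (A1) for the matrix realization: for every slot index j ∈ {1,…,n}, the operation μ is additive in its j-th matrix argument, i.e. μ(A₁,…,A_{j-1}, A_j + A_j′, A_{j+1},…,Aₙ; γ₁,…,γ_{n-1}) = μ(A₁,…,A_j,…,Aₙ; γ₁,…,γ_{n-1}) + μ(A₁,…,A_j′,…,Aₙ; γ₁,…,γ_{n-1}); moreover, for every parameter index i ∈ {1,…,n-1}, μ is additive in γ_i: μ(A₁,…,Aₙ; γ₁,…,γ_i + γ_i′,…,γ_{n-1}) = μ(A₁,…,Aₙ; γ₁,…,γ_i,…,γ_{n-1}) + μ(A₁,…,Aₙ; γ₁,…,γ_i′,…,γ_{n-1}). -/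
open Matrix

/-- The matrix realization of the non-commutative `n`-ary Γ-semiring operation (here
`n = k + 2 ≥ 2`):
`μ(A₁,…,Aₙ; γ₁,…,γ_{n-1}) = (γ₁ • A₁) * A₂ * (γ₂ • A₃) * (γ₃ • A₄) * ⋯ * (γ_{n-1} • Aₙ)`,
i.e. the first factor is `γ₁ • A₁`, the second factor is `A₂`, and the subsequent factors
are `γᵢ • A_{i+1}` for `i = 2, …, n-1`. -/
def muMat {R : Type*} [Semiring R] {m k : ℕ}
    (A : Fin (k + 2) → Matrix (Fin m) (Fin m) R) (γ : Fin (k + 1) → R) :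
    Matrix (Fin m) (Fin m) R :=
  (List.ofFn fun i : Fin (k + 2) =>
    if (i : ℕ) = 1 then A i
    else γ ⟨(i : ℕ) - 1, by have := i.isLt; omega⟩ • A i).prod

/-! Filling the missing second scalar with `1` gives every factor the form `cₗ • Aₗ`, so that each
matrix and each parameter occurs in exactly one factor, and there additively. The product of the
factors is additive in each of them by distributivity. -/

section

variable {R S : Type*} [Semiring S] {n : ℕ}

theorem prod_ofFn_map_update_add {M : Fin n → Type*} [∀ l, AddCommMonoid (M l)]
    (φ : ∀ l, M l →+ S) (a : ∀ l, M l) (i : Fin n) (x y : M i) :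
    (List.ofFn fun l => φ l (Function.update a i (x + y) l)).prod =
      (List.ofFn fun l => φ l (Function.update a i x l)).prod +
        (List.ofFn fun l => φ l (Function.update a i y l)).prod :=
  ((MultilinearMap.mkPiAlgebraFin ℕ n S).compLinearMap
    fun l => (φ l).toNatLinearMap).map_update_add a i x y

theorem prod_ofFn_smul_update_add [DistribSMul R S] (c : Fin n → R) (a : Fin n → S)
    (i : Fin n) (x y : S) :
    (List.ofFn fun l => c l • Function.update a i (x + y) l).prod =
      (List.ofFn fun l => c l • Function.update a i x l).prod +
        (List.ofFn fun l => c l • Function.update a i y l).prod :=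
  prod_ofFn_map_update_add (fun l => DistribSMul.toAddMonoidHom S (c l)) a i x y

theorem prod_ofFn_update_add_smul [Semiring R] [Module R S] (c : Fin n → R) (a : Fin n → S)
    (i : Fin n) (x y : R) :
    (List.ofFn fun l => Function.update c i (x + y) l • a l).prod =
      (List.ofFn fun l => Function.update c i x l • a l).prod +
        (List.ofFn fun l => Function.update c i y l • a l).prod :=
  prod_ofFn_map_update_add (fun l => (smulAddHom R S).flip (a l)) c i x y

end

section

variable {R : Type*} [Semiring R] {m k : ℕ}

theorem muMat_eq_prod_ofFn_insertNth_smul (A : Fin (k + 2) → Matrix (Fin m) (Fin m) R)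
    (γ : Fin (k + 1) → R) :
    muMat A γ = (List.ofFn fun l => Fin.insertNth (α := fun _ => R) 1 1 γ l • A l).prod := by
  unfold muMat
  congr 2 with l : 1
  cases l using Fin.succAboveCases 1 with
  | x => simp only [Fin.val_one, if_true, Fin.insertNth_apply_same, one_smul]
  | p i =>
    rw [Fin.insertNth_apply_succAbove]
    cases i using Fin.cases with
    | zero => simp
    | succ i =>
      rw [Fin.one_succAbove_succ, if_neg (by simp)]
      rfl

theorem muMat_update_add (A : Fin (k + 2) → Matrix (Fin m) (Fin m) R) (γ : Fin (k + 1) → R)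
    (j : Fin (k + 2)) (X Y : Matrix (Fin m) (Fin m) R) :
    muMat (Function.update A j (X + Y)) γ =
      muMat (Function.update A j X) γ + muMat (Function.update A j Y) γ := by
  simp only [muMat_eq_prod_ofFn_insertNth_smul, prod_ofFn_smul_update_add]

theorem muMat_update_param_add (A : Fin (k + 2) → Matrix (Fin m) (Fin m) R)
    (γ : Fin (k + 1) → R) (i : Fin (k + 1)) (x y : R) :
    muMat A (Function.update γ i (x + y)) =
      muMat A (Function.update γ i x) + muMat A (Function.update γ i y) := by
  simp only [muMat_eq_prod_ofFn_insertNth_smul, Fin.insertNth_update, prod_ofFn_update_add_smul]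

end

/-- Axiom (A1) for the matrix realization: `μ` is additive in each of its `n` matrix
arguments and additive in each of its `n - 1` parameters. -/
theorem muMat_additive_in_each_argument {R : Type*} [Semiring R] (m k : ℕ)
    (A : Fin (k + 2) → Matrix (Fin m) (Fin m) R) (γ : Fin (k + 1) → R) :
    (∀ (j : Fin (k + 2)) (A' : Matrix (Fin m) (Fin m) R),
      muMat (Function.update A j (A j + A')) γ =
        muMat A γ + muMat (Function.update A j A') γ) ∧
    (∀ (i : Fin (k + 1)) (γ' : R),
      muMat A (Function.update γ i (γ i + γ')) =
        muMat A γ + muMat A (Function.update γ i γ')) := by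
  constructor
  · intro j A'
    simpa only [Function.update_eq_self] using muMat_update_add A γ j (A j) A'
  · intro i γ'
    simpa only [Function.update_eq_self] using muMat_update_param_add A γ i (γ i) γ'
end

section
/- Axiom (A3) (n-ary associativity / bracket independence) for the matrix realization, in flattened form: for all matrices A₁,…,Aₙ, B₂,…,Bₙ and parameters γ₁,…,γ_{n-1}, δ₁,…,δ_{n-1} in R, (i) first-slot nesting flattens: μ(μ(A₁,…,Aₙ; γ₁,…,γ_{n-1}), B₂,…,Bₙ; δ₁,…,δ_{n-1}) = ((δ₁·γ₁) • A₁) * A₂ * (γ₂ • A₃) * ⋯ * (γ_{n-1} • Aₙ) * B₂ * (δ₂ • B₃) * ⋯ * (δ_{n-1} • Bₙ); and (ii) last-slot nesting flattens: μ(A₁,…,A_{n-1}, μ(B₁,…,Bₙ; δ₁,…,δ_{n-1}); γ₁,…,γ_{n-1}) = (γ₁ • A₁) * A₂ * (γ₂ • A₃) * ⋯ * (γ_{n-2} • A_{n-1}) * ((γ_{n-1}·δ₁) • B₁) * B₂ * (δ₂ • B₃) * ⋯ * (δ_{n-1} • Bₙ). -/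
open Matrix

section GammaProd

variable {R M : Type*} [Monoid M] {k l : ℕ}

/-- The operation `muMat` on an arbitrary monoid `M` with scalars in `R`:
`(γ₁ • a₁) * a₂ * (γ₂ • a₃) * ⋯ * (γ_{n-1} • aₙ)` with `n = k + 2`. The index `i - 1` is truncated
at `i = 0`, so that both the first and the second slot are assigned `γ₁`, which only the first
one uses. -/
def gammaProd [SMul R M] (a : Fin (k + 2) → M) (γ : Fin (k + 1) → R) : M :=
  (List.ofFn fun i : Fin (k + 2) =>
    if (i : ℕ) = 1 then a i else γ ⟨(i : ℕ) - 1, by omega⟩ • a i).prod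

theorem gammaProd_cons [SMul R M] (x : M) (b : Fin (k + 1) → M) (δ : Fin (k + 1) → R) :
    gammaProd (Fin.cons x b) δ =
      δ 0 • x * (List.ofFn fun j : Fin (k + 1) =>
        if (j : ℕ) = 0 then b j else δ j • b j).prod := by
  rw [gammaProd, List.ofFn_succ, List.prod_cons]
  simp

-- The second slot carries no parameter, so it must not be the last one: hence the `k + 2` entries
-- of `a`.
theorem gammaProd_snoc [SMul R M] (a : Fin (k + 2) → M) (x : M) (γ : Fin (k + 2) → R) :
    gammaProd (Fin.snoc a x) γ =
      (List.ofFn fun i : Fin (k + 2) =>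
        if (i : ℕ) = 1 then a i else γ ⟨(i : ℕ) - 1, by omega⟩ • a i).prod *
          γ (Fin.last (k + 1)) • x := by
  have last_ne_one : k + 2 ≠ 1 := by omega
  rw [gammaProd, List.ofFn_succ', List.concat_eq_append, List.prod_append, List.prod_singleton]
  simp only [Fin.snoc_castSucc, Fin.snoc_last, Fin.val_castSucc, Fin.val_last,
    if_neg last_ne_one]
  rfl

variable [Semigroup R] [SemigroupAction R M] [IsScalarTower R M M]

theorem smul_gammaProd (c : R) (a : Fin (k + 2) → M) (γ : Fin (k + 1) → R) :
    c • gammaProd a γ =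
      (List.ofFn fun i : Fin (k + 2) =>
        if (i : ℕ) = 0 then (c * γ 0) • a i
        else if (i : ℕ) = 1 then a i
        else γ ⟨(i : ℕ) - 1, by omega⟩ • a i).prod := by
  rw [gammaProd, List.ofFn_succ, List.prod_cons, ← smul_mul_assoc, List.ofFn_succ, List.prod_cons]
  simp [mul_smul, Fin.succ]

theorem muMat_assoc_flatten_general :
    (∀ (a : Fin (k + 2) → M) (b : Fin (l + 1) → M) (γ : Fin (k + 1) → R) (δ : Fin (l + 1) → R),
      gammaProd (Fin.cons (gammaProd a γ) b) δ =
        ((List.ofFn fun i : Fin (k + 2) =>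
            if (i : ℕ) = 0 then (δ 0 * γ 0) • a i
            else if (i : ℕ) = 1 then a i
            else γ ⟨(i : ℕ) - 1, by omega⟩ • a i) ++
          (List.ofFn fun j : Fin (l + 1) =>
            if (j : ℕ) = 0 then b j else δ j • b j)).prod) ∧
    (∀ (a : Fin (k + 2) → M) (b : Fin (l + 2) → M) (γ : Fin (k + 2) → R) (δ : Fin (l + 1) → R),
      gammaProd (Fin.snoc a (gammaProd b δ)) γ =
        ((List.ofFn fun j : Fin (k + 2) =>
            if (j : ℕ) = 1 then a j else γ ⟨(j : ℕ) - 1, by omega⟩ • a j) ++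
          (List.ofFn fun i : Fin (l + 2) =>
            if (i : ℕ) = 0 then (γ (Fin.last (k + 1)) * δ 0) • b i
            else if (i : ℕ) = 1 then b i
            else δ ⟨(i : ℕ) - 1, by omega⟩ • b i)).prod) := by
  constructor <;> intro a b γ δ
  · rw [gammaProd_cons, smul_gammaProd, List.prod_append]
  · rw [gammaProd_snoc, smul_gammaProd, List.prod_append]

end GammaProd

/-- Axiom (A3) (`n`-ary associativity / bracket independence) for the matrix realization,
in flattened form.

(i) First-slot nesting flattens (`n = k + 2`):
`μ(μ(A₁,…,Aₙ;γ), B₂,…,Bₙ; δ)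
  = ((δ₁·γ₁) • A₁) * A₂ * (γ₂ • A₃) * ⋯ * (γ_{n-1} • Aₙ) * B₂ * (δ₂ • B₃) * ⋯ * (δ_{n-1} • Bₙ)`,
where `B j` stands for `B_{j+2}`.

(ii) Last-slot nesting flattens (`n = k + 3`):
`μ(A₁,…,A_{n-1}, μ(B₁,…,Bₙ;δ); γ)
  = (γ₁ • A₁) * A₂ * (γ₂ • A₃) * ⋯ * (γ_{n-2} • A_{n-1})
      * ((γ_{n-1}·δ₁) • B₁) * B₂ * (δ₂ • B₃) * ⋯ * (δ_{n-1} • Bₙ)`,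
where `A j` stands for `A_{j+1}`. -/
theorem muMat_assoc_flatten {R : Type*} [Semiring R] (m : ℕ) :
    (∀ (k : ℕ) (A : Fin (k + 2) → Matrix (Fin m) (Fin m) R)
        (B : Fin (k + 1) → Matrix (Fin m) (Fin m) R) (γ δ : Fin (k + 1) → R),
      muMat (Fin.cons (muMat A γ) B) δ =
        ((List.ofFn fun i : Fin (k + 2) =>
            if (i : ℕ) = 0 then (δ 0 * γ 0) • A i
            else if (i : ℕ) = 1 then A i
            else γ ⟨(i : ℕ) - 1, by have := i.isLt; omega⟩ • A i) ++
          (List.ofFn fun j : Fin (k + 1) =>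
            if (j : ℕ) = 0 then B j else δ j • B j)).prod) ∧
    (∀ (k : ℕ) (A : Fin (k + 2) → Matrix (Fin m) (Fin m) R)
        (B : Fin (k + 3) → Matrix (Fin m) (Fin m) R) (γ δ : Fin (k + 2) → R),
      muMat (Fin.snoc A (muMat B δ)) γ =
        ((List.ofFn fun j : Fin (k + 2) =>
            if (j : ℕ) = 1 then A j
            else γ ⟨(j : ℕ) - 1, by have := j.isLt; omega⟩ • A j) ++
          (List.ofFn fun i : Fin (k + 3) =>
            if (i : ℕ) = 0 then (γ (Fin.last (k + 1)) * δ 0) • B i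
            else if (i : ℕ) = 1 then B i
            else δ ⟨(i : ℕ) - 1, by have := i.isLt; omega⟩ • B i)).prod) :=
  ⟨fun _ => muMat_assoc_flatten_general.1, fun _ => muMat_assoc_flatten_general.2⟩
end
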